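/- arXiv:1504.07358 — 6 statements merged into one kernel-verified Lean document; each statement's English description precedes it below -/
import Mathlib

section
/- Let k be an integer. There exist finite-dimensional complex representations μ and ρ of the dihedral group F of order 8 such that dim eigenspace(μ(σ²), 1) = dim eigenspace(ρ(σ²), 1) and dim eigenspace(μ(σ²), −1) − dim eigenspace(ρ(σ²), −1) = k, if and only if k is even. (These two conditions say exactly that the virtual representation [μ] − [ρ] ∈ R(F) restricts on the central subgroup H to k·[λ]; thus k·[λ] lies in the image of the restriction map R(F) → R(H) if and only if k is even.) -/
/-!
On the `(-1)`-eigenspace `E` of the central involution `σ²` the rotation `σ` and the reflection `ε`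
restrict to operators `A`, `B` with `A² = -1`, `B² = 1` and `A B = -B A`. Comparing determinants in
`A B = -B A` gives `(-1) ^ dim E = 1`, so `dim E` is even for every representation
(`even_finrank_eigenspace_neg_one`), and a difference of two such dimensions is even.

Conversely, the `n`-fold multiple of the two-dimensional irreducible representation of the dihedral
group (`planeRep n`) has `σ²` acting as `-1` on a space of dimension `2 n`. For `k = 2 m`, the
multiples of order `max m 0` and `max (-m) 0` realize `k`.
-/

/-- Anticommuting invertible operators exist only in even dimension: the determinants of `A * B` and
`-(B * A)` differ by the factor `(-1) ^ dim E`. -/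
lemma even_finrank_of_anticommute {E : Type*} [AddCommGroup E] [Module ℂ E]
    (A B : Module.End ℂ E) (hA : A * A = -1) (hB : B * B = 1)
    (hAB : A * B = -(B * A)) : Even (Module.finrank ℂ E) := by
  have hunitA : LinearMap.det A ≠ 0 := by
    refine (LinearMap.isUnit_det A ((isUnit_pow_iff two_ne_zero).1 ?_)).ne_zero
    rw [pow_two, hA]
    exact isUnit_one.neg
  have hunitB : LinearMap.det B ≠ 0 :=
    (LinearMap.isUnit_det B ⟨⟨B, B, hB, hB⟩, rfl⟩).ne_zero
  have hdet := congrArg LinearMap.det hAB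
  rw [← neg_one_smul ℂ (B * A), LinearMap.det_smul, map_mul, map_mul,
    mul_comm (LinearMap.det B)] at hdet
  have hpow : (-1 : ℂ) ^ Module.finrank ℂ E = 1 :=
    mul_right_cancel₀ (mul_ne_zero hunitA hunitB) (by rw [one_mul]; exact hdet.symm)
  rwa [neg_one_pow_eq_one_iff_even (by norm_num)] at hpow

open DihedralGroup in
lemma even_finrank_eigenspace_neg_one {V : Type*} [AddCommGroup V] [Module ℂ V]
    (μ : Representation ℂ (DihedralGroup 4) V) :
    Even (Module.finrank ℂ (Module.End.eigenspace (μ (r 1 ^ 2)) (-1))) := by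
  -- Since `σ²` is central, its eigenspaces are stable under the whole group.
  have hstable (g : DihedralGroup 4) : ∀ v ∈ Module.End.eigenspace (μ (r 1 ^ 2)) (-1),
      μ g v ∈ Module.End.eigenspace (μ (r 1 ^ 2)) (-1) := by
    intro v hv
    rw [Module.End.mem_eigenspace_iff] at hv ⊢
    have hcentral : r 1 ^ 2 * g = g * r 1 ^ 2 := by revert g; decide
    rw [← Module.End.mul_apply, ← map_mul, hcentral, map_mul, Module.End.mul_apply, hv, map_smul]
  have hmul (g h : DihedralGroup 4) (v : V) : μ g (μ h v) = μ (g * h) v := by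
    rw [map_mul, Module.End.mul_apply]
  refine even_finrank_of_anticommute ((μ (r 1)).restrict (hstable _))
    ((μ (sr 0)).restrict (hstable _)) ?_ ?_ ?_
  · ext ⟨v, hv⟩
    rw [Module.End.mem_eigenspace_iff] at hv
    simpa [hmul, pow_two] using hv
  · ext ⟨v, hv⟩
    simp [hmul]
  · ext ⟨v, hv⟩
    rw [Module.End.mem_eigenspace_iff, neg_one_smul] at hv
    -- `σ ε = ε σ σ²`, and `σ²` acts as `-1` on `v`.
    have hrel : (r 1 * sr 0 : DihedralGroup 4) = sr 0 * r 1 * r 1 ^ 2 := by decide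
    change μ (r 1) (μ (sr 0) v) = -(μ (sr 0) (μ (r 1) v))
    rw [hmul, hmul, hrel, ← hmul, hv, map_neg]

/-- The homomorphism from the dihedral group of order `8` to a ring sending `r 1` to `A` and `sr 0` to
`B`, where `A ^ 2 = -1`, `B ^ 2 = 1` and `A`, `B` anticommute. Mathlib's `sr i` is `sr 0 * r i`. -/
def dihedralHom {R : Type*} [Ring R] (A B : R) (hA : A * A = -1) (hB : B * B = 1)
    (hAB : A * B = -(B * A)) : DihedralGroup 4 →* R where
  toFun
    | .r i => A ^ i.val
    | .sr i => B * A ^ i.val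
  map_one' := pow_zero _
  map_mul' := by
    have hA4 : A ^ 4 = 1 := by
      rw [show 4 = 2 * 2 from rfl, pow_mul, pow_two A, hA, neg_one_sq]
    have hval (a : ℕ) (i : ZMod 4) (h : (a : ZMod 4) = i) : A ^ i.val = A ^ a := by
      rw [← h, ZMod.val_natCast, pow_eq_pow_mod a hA4]
    -- Moving `B` to the left across a power of `A` inverts that power.
    have hswap (i : ZMod 4) : A ^ i.val * B = B * A ^ (-i).val := by
      have hAB' : SemiconjBy B (A ^ 3) A := by
        have hA3 : A ^ 3 = -A := by rw [pow_succ, pow_two, hA, neg_one_mul]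
        rw [SemiconjBy, hA3, hAB, mul_neg]
      have hpow := hAB'.pow_right i.val
      rw [← pow_mul] at hpow
      rw [hval (3 * i.val) (-i) (by clear hpow; revert i; decide)]
      exact hpow.symm
    have hadd (i j : ZMod 4) : A ^ (i + j).val = A ^ i.val * A ^ j.val := by
      rw [hval (i.val + j.val) (i + j) (by simp), pow_add]
    rintro (i | i) (j | j)
    · exact hadd i j
    · change B * A ^ (j - i).val = A ^ i.val * (B * A ^ j.val)
      rw [← mul_assoc, hswap, mul_assoc, ← hadd, neg_add_eq_sub]
    · change B * A ^ (i + j).val = B * A ^ i.val * A ^ j.val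
      rw [hadd, mul_assoc]
    · change A ^ (j - i).val = B * A ^ i.val * (B * A ^ j.val)
      rw [mul_assoc, ← mul_assoc (A ^ i.val), hswap, mul_assoc, ← hadd, ← mul_assoc, hB, one_mul,
        neg_add_eq_sub]

/-- The rotation `(x, y) ↦ (-y, x)` by a quarter turn on `ℂⁿ × ℂⁿ`. -/
def quarterTurn (n : ℕ) : Module.End ℂ ((Fin n → ℂ) × (Fin n → ℂ)) :=
  (-LinearMap.snd ℂ _ _).prod (LinearMap.fst ℂ _ _)

/-- The reflection `(x, y) ↦ (x, -y)` on `ℂⁿ × ℂⁿ`. -/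
def planeReflection (n : ℕ) : Module.End ℂ ((Fin n → ℂ) × (Fin n → ℂ)) :=
  (LinearMap.fst ℂ _ _).prod (-LinearMap.snd ℂ _ _)

/-- The `n`-fold multiple of the two-dimensional irreducible representation of the dihedral group of
order `8`, on `ℂⁿ × ℂⁿ`: `r 1` is the quarter turn and `sr 0` is the reflection. -/
def planeRep (n : ℕ) : Representation ℂ (DihedralGroup 4) ((Fin n → ℂ) × (Fin n → ℂ)) :=
  dihedralHom (quarterTurn n) (planeReflection n)
    (by ext <;> simp [quarterTurn])
    (by ext <;> simp [planeReflection])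
    (by ext <;> simp [quarterTurn, planeReflection])

lemma planeRep_r_one_sq (n : ℕ) : planeRep n (DihedralGroup.r 1 ^ 2) = -1 := by
  rw [DihedralGroup.r_one_pow]
  change quarterTurn n ^ 2 = -1
  ext <;> simp [quarterTurn, pow_two]

lemma finrank_planeRep_eigenspace_one (n : ℕ) :
    Module.finrank ℂ (Module.End.eigenspace (planeRep n (DihedralGroup.r 1 ^ 2)) 1) = 0 := by
  have hbot : Module.End.eigenspace (planeRep n (DihedralGroup.r 1 ^ 2)) 1 = ⊥ := by
    rw [planeRep_r_one_sq, eq_bot_iff]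
    intro v hv
    rw [Module.End.mem_eigenspace_iff, one_smul] at hv
    exact (Submodule.mem_bot ℂ).2 (neg_eq_self.1 hv)
  rw [hbot, finrank_bot]

lemma finrank_planeRep_eigenspace_neg_one (n : ℕ) :
    Module.finrank ℂ (Module.End.eigenspace (planeRep n (DihedralGroup.r 1 ^ 2)) (-1)) = 2 * n := by
  have htop : Module.End.eigenspace (planeRep n (DihedralGroup.r 1 ^ 2)) (-1) = ⊤ := by
    rw [planeRep_r_one_sq, eq_top_iff]
    intro v _
    rw [Module.End.mem_eigenspace_iff, neg_one_smul]
    rfl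
  rw [htop, finrank_top, Module.finrank_prod, Module.finrank_fin_fun, two_mul]


/-- For `k : ℤ`, there exist finite-dimensional complex representations
`μ`, `ρ` of the dihedral group `F` of order 8 with
`dim eigenspace(μ(σ²), 1) = dim eigenspace(ρ(σ²), 1)` and
`dim eigenspace(μ(σ²), −1) − dim eigenspace(ρ(σ²), −1) = k` iff `k` is even. -/
theorem dihedral_restriction_image (k : ℤ) :
    (∃ (V : Type) (_ : AddCommGroup V) (_ : Module ℂ V) (_ : FiniteDimensional ℂ V)
       (W : Type) (_ : AddCommGroup W) (_ : Module ℂ W) (_ : FiniteDimensional ℂ W)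
       (μ : Representation ℂ (DihedralGroup 4) V)
       (ρ : Representation ℂ (DihedralGroup 4) W),
       Module.finrank ℂ (Module.End.eigenspace (μ ((DihedralGroup.r 1) ^ 2)) 1)
         = Module.finrank ℂ (Module.End.eigenspace (ρ ((DihedralGroup.r 1) ^ 2)) 1) ∧
       (Module.finrank ℂ (Module.End.eigenspace (μ ((DihedralGroup.r 1) ^ 2)) (-1)) : ℤ)
         - (Module.finrank ℂ (Module.End.eigenspace (ρ ((DihedralGroup.r 1) ^ 2)) (-1)) : ℤ)
         = k)
    ↔ Even k := by
  constructor
  · rintro ⟨V, _, _, _, W, _, _, _, μ, ρ, -, rfl⟩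
    exact ((Int.even_coe_nat _).2 (even_finrank_eigenspace_neg_one μ)).sub
      ((Int.even_coe_nat _).2 (even_finrank_eigenspace_neg_one ρ))
  · rintro ⟨m, rfl⟩
    refine ⟨_, inferInstance, inferInstance, inferInstance, _, inferInstance, inferInstance,
      inferInstance, planeRep m.toNat, planeRep (-m).toNat, ?_, ?_⟩
    · rw [finrank_planeRep_eigenspace_one, finrank_planeRep_eigenspace_one]
    · rw [finrank_planeRep_eigenspace_neg_one, finrank_planeRep_eigenspace_neg_one]
      omega
end

section
/- For every finite-dimensional complex representation ρ of the dihedral group F of order 8, the dimension of the eigenspace of ρ(σ²) for the eigenvalue −1 is even. (Equivalently: the multiplicity of λ in the restriction to the central subgroup H of any complex representation of F is even.) -/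
/-!
On the `(-1)`-eigenspace `W` of the central involution `ρ(σ²)`, the operators `S = ρ(σ)` and
`T = ρ(ε)` act invertibly, and the relation `σ ε = ε σ σ²` turns into `S T = -T S`. Taking
determinants gives `det S * det T = (-1) ^ dim W * (det T * det S)`, so `(-1) ^ dim W = 1`.
-/

open DihedralGroup in
/-- For every finite-dimensional complex representation `ρ` of the dihedral
group of order 8, the dimension of the `(−1)`-eigenspace of `ρ(σ²)` is even. -/
theorem dihedral_even_multiplicity (V : Type) [AddCommGroup V] [Module ℂ V]
    [FiniteDimensional ℂ V] (ρ : Representation ℂ (DihedralGroup 4) V) :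
    Even (Module.finrank ℂ (Module.End.eigenspace (ρ ((DihedralGroup.r 1) ^ 2)) (-1))) := by
  set W := Module.End.eigenspace (ρ ((r 1) ^ 2)) (-1) with hW
  have memW : ∀ v, v ∈ W ↔ ρ ((r 1) ^ 2) v = -v := fun v => by
    rw [hW, Module.End.mem_eigenspace_iff, neg_one_smul]
  have central : ∀ g : DihedralGroup 4, (r 1) ^ 2 * g = g * (r 1) ^ 2 := by decide
  have stable : ∀ g, ∀ v ∈ W, ρ g v ∈ W := fun g v hv => by
    rw [memW] at hv ⊢
    rw [← Module.End.mul_apply, ← map_mul, central, map_mul, Module.End.mul_apply, hv, map_neg]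
  let S : W →ₗ[ℂ] W := (ρ (r 1)).restrict (stable (r 1))
  let T : W →ₗ[ℂ] W := (ρ (sr 0)).restrict (stable (sr 0))
  have hSS : S * S = (-1 : ℂ) • 1 := by
    ext ⟨v, hv⟩
    have h : ρ (r 1) (ρ (r 1) v) = -v := by
      rw [← Module.End.mul_apply, ← map_mul, ← pow_two]
      exact (memW v).1 hv
    simpa [S] using h
  have hTT : T * T = 1 := by
    ext ⟨v, hv⟩
    have h : ρ (sr 0) (ρ (sr 0) v) = v := by
      rw [← Module.End.mul_apply, ← map_mul, sr_mul_self, map_one, Module.End.one_apply]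
    simpa [T] using h
  have hST : S * T = (-1 : ℂ) • (T * S) := by
    ext ⟨v, hv⟩
    have rel : (r 1 * sr 0 : DihedralGroup 4) = sr 0 * r 1 * (r 1) ^ 2 := by decide
    have h : ρ (r 1) (ρ (sr 0) v) = -ρ (sr 0) (ρ (r 1) v) := by
      rw [← Module.End.mul_apply, ← map_mul, rel, map_mul, Module.End.mul_apply, (memW v).1 hv,
        map_neg, map_mul, Module.End.mul_apply]
    simpa [S, T] using h
  have dS : LinearMap.det S ≠ 0 := fun h0 => by
    have h := congrArg LinearMap.det hSS
    rw [map_mul, h0, LinearMap.det_smul, map_one, mul_one, mul_zero] at h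
    exact pow_ne_zero _ (by norm_num) h.symm
  have dT : LinearMap.det T ≠ 0 := fun h0 => by
    have h := congrArg LinearMap.det hTT
    simp [h0] at h
  have h := congrArg LinearMap.det hST
  rw [map_mul, LinearMap.det_smul, map_mul, mul_comm (LinearMap.det T)] at h
  have h1 : (-1 : ℂ) ^ Module.finrank ℂ W = 1 :=
    (mul_eq_right₀ (mul_ne_zero dS dT)).1 h.symm
  exact (neg_one_pow_eq_one_iff_even (by norm_num)).1 h1
end

section
/- For every finite-dimensional complex representation ρ of the dihedral group F of order 8, the eigenspace of ρ(σ) for the eigenvalue i and the eigenspace of ρ(σ) for the eigenvalue −i have the same dimension, where σ = r 1 is the rotation of order 4. -/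
/-!
The rotation `σ` is conjugate to its inverse by the reflection `ε`, so `ρ(ε)` exchanges the
eigenspaces of `ρ(σ)` for inverse eigenvalues. As `i⁻¹ = -i`, the inequality of dimensions in
`finrank_eigenspace_le_of_mul_eq_one` applies in both directions.
-/

/-- Since `σ ε σ = ε`, the reflection `ε` carries the `c`-eigenspace of `ρ(σ)` into the
`d`-eigenspace whenever `c * d = 1`; it is invertible, so this bounds the dimensions. -/
lemma finrank_eigenspace_le_of_mul_eq_one {V : Type} [AddCommGroup V] [Module ℂ V]
    [FiniteDimensional ℂ V] (ρ : Representation ℂ (DihedralGroup 4) V) {c d : ℂ}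
    (h : c * d = 1) :
    Module.finrank ℂ (Module.End.eigenspace (ρ (DihedralGroup.r 1)) c)
      ≤ Module.finrank ℂ (Module.End.eigenspace (ρ (DihedralGroup.r 1)) d) := by
  have hmaps : ∀ v ∈ Module.End.eigenspace (ρ (DihedralGroup.r 1)) c,
      ρ (DihedralGroup.sr 0) v ∈ Module.End.eigenspace (ρ (DihedralGroup.r 1)) d := by
    intro v hv
    rw [Module.End.mem_eigenspace_iff] at hv ⊢
    have hrel : (DihedralGroup.r 1 * (DihedralGroup.sr 0 * DihedralGroup.r 1) :
        DihedralGroup 4) = DihedralGroup.sr 0 := by decide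
    have key : ρ (DihedralGroup.sr 0) v
        = c • ρ (DihedralGroup.r 1) (ρ (DihedralGroup.sr 0) v) := by
      conv_lhs => rw [← hrel]
      rw [map_mul, map_mul, Module.End.mul_apply, Module.End.mul_apply, hv, map_smul, map_smul]
    conv_rhs => rw [key]
    rw [smul_smul, mul_comm d c, h, one_smul]
  refine LinearMap.finrank_le_finrank_of_injective
    (f := (ρ (DihedralGroup.sr 0)).restrict hmaps) ?_
  intro v w hvw
  exact Subtype.ext ((ρ.apply_bijective (DihedralGroup.sr 0)).1 (congrArg Subtype.val hvw))


/-- For every finite-dimensional complex representation `ρ` of the dihedral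
group of order 8, the `i`-eigenspace and the `−i`-eigenspace of `ρ(σ)` have the same
dimension, where `σ = r 1` is the rotation of order 4. -/
theorem dihedral_eigenspace_i_neg_i (V : Type) [AddCommGroup V] [Module ℂ V]
    [FiniteDimensional ℂ V] (ρ : Representation ℂ (DihedralGroup 4) V) :
    Module.finrank ℂ (Module.End.eigenspace (ρ (DihedralGroup.r 1)) Complex.I)
      = Module.finrank ℂ (Module.End.eigenspace (ρ (DihedralGroup.r 1)) (-Complex.I)) := by
  exact le_antisymm
    (finrank_eigenspace_le_of_mul_eq_one ρ (by simp))
    (finrank_eigenspace_le_of_mul_eq_one ρ (by simp))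
end

section
/- Let Γ be a finite simple graph with vertex set S. For each clique J of Γ set R_J := ℤ[(ℤ/2)^J], the integral group algebra of the group of functions J → ℤ/2, and for cliques J' ⊆ J let res^J_{J'} : R_J → R_{J'} be the ring homomorphism induced by the group homomorphism (J → ℤ/2) → (J' → ℤ/2) given by restriction of functions. Let L be the inverse limit of this system: the subring of the product ∏_{J clique} R_J consisting of all families (x_J) with res^J_{J'}(x_J) = x_{J'} whenever J' ⊆ J are cliques. Then the natural ring homomorphism φ : ℤ[(ℤ/2)^S] → L, whose J-th component is induced by restriction of functions from S to J, is surjective, and its kernel is the ideal generated by the elements [e_s + e_t] − [e_s] − [e_t] + 1 for all pairs of distinct non-adjacent vertices s, t ∈ S. -/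
/-!
Write `y_s = [e_s] - 1`. The proposed generator attached to `s, t` is the product `y_s * y_t`.

For `K ⊆ S`, restriction `π_K : ℤ[(ℤ/2)^S] → R_K` has the section `ι_K` given by extension by zero.

* Surjectivity is proved by induction on the size of cliques. If `a` has the right components at
  all cliques of size `< n`, add `∑ ι_K (x_K - π_K a)` over the cliques `K` of size `n`. The summand
  of `K` fixes the component at `K`, and its component at a clique `J ≠ K` of size `≤ n` vanishes:
  `π_J ∘ ι_K` factors through restriction to `J ∩ K`, which is smaller than `K`, and there
  `x_K - π_K a` restricts to zero.
* For the kernel, set `E_T = ∑_{J ⊆ T} (-1)^|T \ J| ι_J π_J` (`mobius`). Then `a = ∑_T E_T a`.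
  If `a` is in the kernel and `T` is a clique, then `E_T a = 0`. If `T` is not a clique, `E_T`
  takes values in the ideal, since `E_T [g] = ∏_{s ∈ T} ([g_s e_s] - 1)`, whose factors at two
  non-adjacent vertices of `T` are multiples of `y_s` and `y_t`.
-/

/-- The monoid homomorphism `Multiplicative (T → ℤ/2) →* Multiplicative (T' → ℤ/2)`
induced by restricting functions along `f : T' → T`. -/
def restrictHom {T T' : Type} (f : T' → T) :
    Multiplicative (T → ZMod 2) →* Multiplicative (T' → ZMod 2) :=
  MonoidHom.mk' (fun g => Multiplicative.ofAdd fun t' => Multiplicative.toAdd g (f t'))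
    (fun _ _ => rfl)

/-- For cliques `J' ⊆ J`, the ring homomorphism `R_J → R_{J'}` between integral group
algebras induced by restriction of functions. -/
noncomputable def cliqueRes {S : Type} {J J' : Finset S} (h : J' ⊆ J) :
    MonoidAlgebra ℤ (Multiplicative (↥J → ZMod 2)) →+*
      MonoidAlgebra ℤ (Multiplicative (↥J' → ZMod 2)) :=
  MonoidAlgebra.mapDomainRingHom ℤ
    (restrictHom fun s : ↥J' => (⟨s.1, h s.2⟩ : ↥J))

/-- The natural ring homomorphism from `ℤ[(ℤ/2)^S]` to the product of the group algebras
`R_J = ℤ[(ℤ/2)^J]` over the cliques `J` of `Γ`, with `J`-th component induced by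
restriction of functions from `S` to `J`. -/
noncomputable def cliquePhi (S : Type) (Γ : SimpleGraph S) :
    MonoidAlgebra ℤ (Multiplicative (S → ZMod 2)) →+*
      ∀ J : {J : Finset S // Γ.IsClique (J : Set S)},
        MonoidAlgebra ℤ (Multiplicative (↥J.1 → ZMod 2)) :=
  Pi.ringHom fun J =>
    MonoidAlgebra.mapDomainRingHom ℤ (restrictHom fun s : ↥J.1 => (s : S))

namespace CliqueLimit

/-! ### Restriction and extension by zero -/

/-- The integral group algebra of the group of functions `T → ℤ/2`. -/
abbrev GA (T : Type) := MonoidAlgebra ℤ (Multiplicative (T → ZMod 2))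

variable {S : Type}

/-- The restriction map `π_K : ℤ[(ℤ/2)^S] → R_K`, for an arbitrary finite subset `K`. -/
noncomputable def res (K : Finset S) : GA S →+* GA ↥K :=
  MonoidAlgebra.mapDomainRingHom ℤ (restrictHom fun s : ↥K => (s : S))

lemma cliqueRes_res {J K : Finset S} (h : J ⊆ K) (a : GA S) :
    cliqueRes h (res K a) = res J a := by
  induction a using MonoidAlgebra.induction_linear with
  | zero => simp
  | add f g hf hg => simp [hf, hg]
  | single g r =>
    simp only [res, cliqueRes, MonoidAlgebra.mapDomainRingHom_apply,
      MonoidAlgebra.mapDomain_single]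
    rfl

lemma cliquePhi_apply (Γ : SimpleGraph S) (a : GA S)
    (J : {J : Finset S // Γ.IsClique (J : Set S)}) : cliquePhi S Γ a J = res J.1 a := rfl

variable [DecidableEq S]

/-- Extension by zero of functions on `K` to functions on `S`. -/
def extHom (K : Finset S) :
    Multiplicative (↥K → ZMod 2) →* Multiplicative (S → ZMod 2) :=
  MonoidHom.mk'
    (fun g => Multiplicative.ofAdd fun s => if h : s ∈ K then Multiplicative.toAdd g ⟨s, h⟩ else 0)
    (fun a b => by
      apply Multiplicative.toAdd.injective
      funext s
      by_cases h : s ∈ K <;> simp [h])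

/-- The section `ι_K : R_K → ℤ[(ℤ/2)^S]` of restriction, induced by extension by zero. -/
noncomputable def ext (K : Finset S) : GA ↥K →+* GA S :=
  MonoidAlgebra.mapDomainRingHom ℤ (extHom K)

lemma res_ext (K : Finset S) (z : GA ↥K) : res K (ext K z) = z := by
  induction z using MonoidAlgebra.induction_linear with
  | zero => simp
  | add f g hf hg => simp [hf, hg]
  | single g r =>
    simp only [res, ext, MonoidAlgebra.mapDomainRingHom_apply, MonoidAlgebra.mapDomain_single]
    congr 1
    apply Multiplicative.toAdd.injective
    funext s
    simp [restrictHom, extHom]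

/-- `π_J ∘ ι_K` factors through restriction to `J ∩ K`. -/
lemma res_ext_inter (J K : Finset S) (z : GA ↥K) :
    res J (ext K z) = res J (ext (J ∩ K) (cliqueRes Finset.inter_subset_right z)) := by
  induction z using MonoidAlgebra.induction_linear with
  | zero => simp
  | add f g hf hg => simp [hf, hg]
  | single g r =>
    simp only [res, ext, cliqueRes, MonoidAlgebra.mapDomainRingHom_apply,
      MonoidAlgebra.mapDomain_single]
    congr 1
    apply Multiplicative.toAdd.injective
    funext s
    simp [restrictHom, extHom]

/-! ### Surjectivity -/

/-- Some element of `ℤ[(ℤ/2)^S]` has the components of a given compatible family at all cliques of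
size less than `n`. -/
lemma exists_lift_lt [Fintype S] (Γ : SimpleGraph S)
    (x : ∀ J : {J : Finset S // Γ.IsClique (J : Set S)}, GA ↥J.1)
    (hx : ∀ (J J' : {J : Finset S // Γ.IsClique (J : Set S)}) (h : J'.1 ⊆ J.1),
      cliqueRes h (x J) = x J') (n : ℕ) :
    ∃ a : GA S, ∀ J, J.1.card < n → res J.1 a = x J := by
  classical
  induction n with
  | zero => exact ⟨0, fun J h => absurd h (Nat.not_lt_zero _)⟩
  | succ n ih =>
    obtain ⟨a, ha⟩ := ih
    -- Correcting the component at `K` does not disturb the component at `J` if `J ∩ K` is small.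
    have key : ∀ J K : {J : Finset S // Γ.IsClique (J : Set S)}, (J.1 ∩ K.1).card < n →
        res J.1 (ext K.1 (x K - res K.1 a)) = 0 := by
      intro J K h
      rw [res_ext_inter, map_sub, cliqueRes_res]
      let L : {J : Finset S // Γ.IsClique (J : Set S)} :=
        ⟨J.1 ∩ K.1, K.2.subset (by simp)⟩
      rw [hx K L Finset.inter_subset_right, ← ha L h, sub_self, map_zero, map_zero]
    refine ⟨a + ∑ K : {J : Finset S // Γ.IsClique (J : Set S)} with K.1.card = n,
      ext K.1 (x K - res K.1 a), fun J hJ => ?_⟩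
    rw [map_add, map_sum]
    rcases Nat.lt_succ_iff_lt_or_eq.mp hJ with hlt | heq
    · rw [Finset.sum_eq_zero, add_zero, ha J hlt]
      intro K _
      exact key J K ((Finset.card_le_card Finset.inter_subset_left).trans_lt hlt)
    · rw [Finset.sum_eq_single J, res_ext, add_sub_cancel]
      · intro K hK hne
        apply key J K
        rw [← heq]
        refine Finset.card_lt_card (Finset.ssubset_iff_subset_ne.mpr
          ⟨Finset.inter_subset_left, fun h => hne (Subtype.ext ?_)⟩)
        refine (Finset.eq_of_subset_of_card_le (Finset.inter_eq_left.mp h) ?_).symm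
        rw [(Finset.mem_filter.mp hK).2, heq]
      · simp [heq]

/-! ### Möbius components and the kernel -/

/-- The Möbius component `E_T = ∑_{J ⊆ T} (-1)^|T \ J| ι_J π_J`. -/
noncomputable def mobius (T : Finset S) : GA S →+ GA S :=
  ∑ J ∈ T.powerset, ((-1 : ℤ) ^ (T \ J).card) • ((ext J).comp (res J)).toAddMonoidHom

lemma mobius_apply (T : Finset S) (a : GA S) :
    mobius T a = ∑ J ∈ T.powerset, ((-1 : ℤ) ^ (T \ J).card) • ext J (res J a) := by
  simp [mobius, AddMonoidHom.finsetSum_apply]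

/-- The factor `[g_s e_s]` of the group element `g`. -/
noncomputable def coord (g : S → ZMod 2) (s : S) : GA S :=
  MonoidAlgebra.of ℤ _ (Multiplicative.ofAdd (Pi.single s (g s)))

/-- The product over `J` of the factors of `g` is `[g]` with its coordinates outside `J` erased. -/
lemma prod_coord (g : S → ZMod 2) (J : Finset S) :
    ∏ s ∈ J, coord g s = ext J (res J (MonoidAlgebra.of ℤ _ (Multiplicative.ofAdd g))) := by
  simp only [coord]
  rw [← map_prod, ← ofAdd_sum]
  simp only [res, ext, MonoidAlgebra.of_apply, MonoidAlgebra.mapDomainRingHom_apply,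
    MonoidAlgebra.mapDomain_single]
  congr 1
  apply Multiplicative.toAdd.injective
  funext s
  simp [restrictHom, extHom, Finset.sum_apply, Pi.single_apply]

/-- On group elements, the alternating sum defining `E_T` is an expanded product over `T`. -/
lemma mobius_of (T : Finset S) (g : S → ZMod 2) :
    mobius T (MonoidAlgebra.of ℤ _ (Multiplicative.ofAdd g)) = ∏ s ∈ T, (coord g s - 1) := by
  simp only [sub_eq_add_neg]
  rw [mobius_apply, Finset.prod_add]
  refine Finset.sum_congr rfl fun J _ => ?_
  rw [prod_coord, Finset.prod_const, zsmul_eq_mul, mul_comm]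
  push_cast
  rfl

/-- On group elements this is the expansion of `[g] = ∏_s (1 + ([g_s e_s] - 1))`. -/
lemma sum_mobius [Fintype S] (a : GA S) : ∑ T : Finset S, mobius T a = a := by
  induction a using MonoidAlgebra.induction_on with
  | of g =>
    have h := Finset.prod_one_add (f := fun s => coord g.toAdd s - 1) (Finset.univ : Finset S)
    have h2 := prod_coord g.toAdd Finset.univ
    simp only [add_sub_cancel, Finset.powerset_univ] at h
    calc _ = ∑ T : Finset S, ∏ s ∈ T, (coord g.toAdd s - 1) :=
          Finset.sum_congr rfl fun T _ => mobius_of T g.toAdd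
      _ = _ := by
          rw [← h, h2]
          simp only [res, ext, MonoidAlgebra.of_apply, MonoidAlgebra.mapDomainRingHom_apply,
            MonoidAlgebra.mapDomain_single]
          congr 1
          apply Multiplicative.toAdd.injective
          funext s
          simp [restrictHom, extHom]
  | add f g hf hg => simp only [map_add, Finset.sum_add_distrib, hf, hg]
  | smul r f hf => simp only [map_zsmul, ← Finset.smul_sum, hf]

/-- The generator attached to `s, t` is `y_s * y_t`, where `y_s = coord 1 s - 1`. -/
lemma gen_eq (s t : S) :
    MonoidAlgebra.of ℤ (Multiplicative (S → ZMod 2))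
              (Multiplicative.ofAdd (Pi.single s 1 + Pi.single t 1))
          - MonoidAlgebra.of ℤ (Multiplicative (S → ZMod 2))
              (Multiplicative.ofAdd (Pi.single s 1))
          - MonoidAlgebra.of ℤ (Multiplicative (S → ZMod 2))
              (Multiplicative.ofAdd (Pi.single t 1))
          + 1 = (coord 1 s - 1) * (coord 1 t - 1) := by
  simp only [coord, Pi.one_apply]
  rw [ofAdd_add, map_mul]
  ring

/-- Since `g_s` is `0` or `1`, the element `[g_s e_s] - 1` is `0` or `y_s`. -/
lemma coord_sub_one (g : S → ZMod 2) (s : S) :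
    coord 1 s - 1 ∣ coord g s - 1 := by
  have h : g s = 0 ∨ g s = 1 := by
    generalize g s = c
    revert c
    decide
  rcases h with h | h
  · have : coord g s = 1 := by simp [coord, h, MonoidAlgebra.one_def]
    simp [this]
  · have : coord g s = coord 1 s := by simp [coord, h]
    rw [this]

/-- If an ideal contains `y_s * y_t` for two vertices of `T`, it contains the image of `E_T`. -/
lemma mobius_mem (I : Ideal (GA S)) {T : Finset S} {s t : S} (hs : s ∈ T) (ht : t ∈ T)
    (hst : s ≠ t) (hI : (coord 1 s - 1) * (coord 1 t - 1) ∈ I) (a : GA S) :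
    mobius T a ∈ I := by
  induction a using MonoidAlgebra.induction_on with
  | of g =>
    have : mobius T (MonoidAlgebra.of ℤ _ g) = _ := mobius_of T g.toAdd
    rw [this]
    refine I.mem_of_dvd ?_ hI
    rw [← Finset.mul_prod_erase T _ hs]
    exact mul_dvd_mul (coord_sub_one _ _) ((coord_sub_one _ _).trans
      (Finset.dvd_prod_of_mem _ (Finset.mem_erase.mpr ⟨hst.symm, ht⟩)))
  | add f g hf hg => rw [map_add]; exact I.add_mem hf hg
  | smul r f hf => rw [map_zsmul]; exact zsmul_mem hf r

lemma res_coord_of_notMem {J : Finset S} {s : S} (h : s ∉ J) (g : S → ZMod 2) :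
    res J (coord g s) = 1 := by
  simp only [res, coord, MonoidAlgebra.of_apply, MonoidAlgebra.mapDomainRingHom_apply,
    MonoidAlgebra.mapDomain_single, MonoidAlgebra.one_def]
  congr 1
  apply Multiplicative.toAdd.injective
  funext u
  have : (u : S) ≠ s := fun hu => h (hu ▸ u.2)
  simp [restrictHom, this]

end CliqueLimit

open CliqueLimit in
/-- The natural map `φ : ℤ[(ℤ/2)^S] → L` to the inverse limit of the group
algebras `R_J` over the cliques of `Γ` is surjective (every compatible family is in the
range of `φ`), and its kernel is the ideal generated by the elements
`[e_s + e_t] − [e_s] − [e_t] + 1` for distinct non-adjacent vertices `s, t`. -/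
theorem cliquePhi_surjective_ker (S : Type) [Fintype S] [DecidableEq S]
    (Γ : SimpleGraph S) :
    (∀ x : ∀ J : {J : Finset S // Γ.IsClique (J : Set S)},
        MonoidAlgebra ℤ (Multiplicative (↥J.1 → ZMod 2)),
      (∀ (J J' : {J : Finset S // Γ.IsClique (J : Set S)}) (h : J'.1 ⊆ J.1),
        cliqueRes h (x J) = x J') →
      ∃ a : MonoidAlgebra ℤ (Multiplicative (S → ZMod 2)), cliquePhi S Γ a = x) ∧
    RingHom.ker (cliquePhi S Γ) = Ideal.span
      {x : MonoidAlgebra ℤ (Multiplicative (S → ZMod 2)) | ∃ s t : S, s ≠ t ∧ ¬ Γ.Adj s t ∧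
        x = MonoidAlgebra.of ℤ (Multiplicative (S → ZMod 2))
              (Multiplicative.ofAdd (Pi.single s 1 + Pi.single t 1))
          - MonoidAlgebra.of ℤ (Multiplicative (S → ZMod 2))
              (Multiplicative.ofAdd (Pi.single s 1))
          - MonoidAlgebra.of ℤ (Multiplicative (S → ZMod 2))
              (Multiplicative.ofAdd (Pi.single t 1))
          + 1} := by
  classical
  refine ⟨fun x hx => ?_, le_antisymm (fun a ha => ?_) ?_⟩
  · obtain ⟨a, ha⟩ := exists_lift_lt Γ x hx (Fintype.card S + 1)
    exact ⟨a, funext fun J => ha J (Nat.lt_succ_of_le (Finset.card_le_univ _))⟩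
  · rw [← sum_mobius a]
    refine Ideal.sum_mem _ fun T _ => ?_
    by_cases hT : Γ.IsClique (T : Set S)
    · rw [mobius_apply, Finset.sum_eq_zero]
      · exact Ideal.zero_mem _
      · intro J hJ
        have h0 : res J a = 0 :=
          congrFun (RingHom.mem_ker.mp ha)
            ⟨J, hT.subset (Finset.coe_subset.mpr (Finset.mem_powerset.mp hJ))⟩
        rw [h0, map_zero, smul_zero]
    · obtain ⟨s, hs, t, ht, hst, hadj⟩ : ∃ s ∈ T, ∃ t ∈ T, s ≠ t ∧ ¬ Γ.Adj s t := by
        by_contra! hcon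
        exact hT fun s hs t ht hst => hcon s hs t ht hst
      refine mobius_mem _ hs ht hst ?_ a
      rw [← gen_eq]
      exact Ideal.subset_span ⟨s, t, hst, hadj, rfl⟩
  · rw [Ideal.span_le]
    rintro _ ⟨s, t, hst, hadj, rfl⟩
    rw [gen_eq]
    refine RingHom.mem_ker.mpr (funext fun J => ?_)
    rw [cliquePhi_apply, map_mul, map_sub, map_sub, map_one]
    -- A clique cannot contain both `s` and `t`, so one of the two factors restricts to zero.
    by_cases hs : s ∈ J.1
    · have ht : t ∉ J.1 := fun ht => hadj (J.2 hs ht hst)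
      simp [res_coord_of_notMem ht]
    · simp [res_coord_of_notMem hs]
end

section
/- Let S be a finite set, let A := ℤ[X_s : s ∈ S]/(X_s² + 2X_s : s ∈ S), and let 𝔞 ⊆ A be the ideal generated by the images of the variables X_s. Then the 𝔞-adic completion of A is isomorphic, as an abelian group, to ℤ × ∏_{J} ℤ₂, where J ranges over the nonempty subsets of S and ℤ₂ denotes the ring of 2-adic integers. -/
/-!
Write `x_s` for the image of `X_s` in `A`, so that `x_s ^ 2 = -2 x_s`. A monomial with exponent
vector `m` and support `J` equals `(-2) ^ (|m| - |J|) ∏_{s ∈ J} x_s` in `A`, and the `ℤ`-linear map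
`coords` on polynomials that records this coefficient at `J` vanishes on the defining ideal. Hence
`A` is free over `ℤ` on the square-free monomials `x_J = ∏_{s ∈ J} x_s`, and since the `k`-th power
of the ideal generated by the variables consists of the polynomials all of whose monomials have
degree at least `k`, the power `𝔞 ^ k` is described exactly in these coordinates
(`mk_mem_augIdeal_pow_iff`): the coordinate at `∅` is zero if `k ≥ 1`, and the coordinate at a
nonempty `J` is divisible by `2 ^ (k - |J|)`.

Passing to the limit over `k`, the coordinate at `∅` is an integer and the coordinate at each
nonempty `J` is a 2-adic integer. The isomorphism is written down from `ℤ × ∏_J ℤ₂` to the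
completion: at level `k`, a 2-adic integer is replaced by an integer congruent to it modulo `2 ^ k`.
-/

open MvPolynomial

/-- The ring `A = ℤ[X_s : s ∈ S]/(X_s² + 2X_s : s ∈ S)`. -/
noncomputable abbrev augRing (S : Type) : Type :=
  MvPolynomial S ℤ ⧸ Ideal.span {p : MvPolynomial S ℤ | ∃ s : S, p = X s ^ 2 + 2 * X s}

/-- The ideal `𝔞 ⊆ A` generated by the images of the variables `X_s`. -/
noncomputable def augIdeal (S : Type) : Ideal (augRing S) :=
  Ideal.span (Set.range fun s : S =>
    Ideal.Quotient.mk
      (Ideal.span {p : MvPolynomial S ℤ | ∃ s : S, p = X s ^ 2 + 2 * X s}) (X s))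

namespace AugCompletion

variable {S : Type}

/-- The ideal generated by the polynomials `X_s² + 2X_s`, so that `A = ℤ[X_s] / relIdeal S`. -/
noncomputable abbrev relIdeal (S : Type) : Ideal (MvPolynomial S ℤ) :=
  Ideal.span {p : MvPolynomial S ℤ | ∃ s : S, p = X s ^ 2 + 2 * X s}

/-! ### Coordinates on `A` -/

/-- The exponent vector of the square-free monomial `∏_{s ∈ J} X_s`. -/
noncomputable def sqfree (J : Finset S) : S →₀ ℕ := Finsupp.indicator J fun _ _ => 1

lemma support_sqfree (J : Finset S) : (sqfree J).support = J := by
  classical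
  ext s
  simp [sqfree, Finsupp.indicator_apply]

lemma degree_sqfree (J : Finset S) : (sqfree J).degree = J.card := by
  classical
  rw [Finsupp.degree_apply, support_sqfree, Finset.card_eq_sum_ones]
  refine Finset.sum_congr rfl fun s hs => ?_
  simp [sqfree, Finsupp.indicator_apply, hs]

lemma card_support_le_degree (m : S →₀ ℕ) : m.support.card ≤ m.degree := by
  rw [Finsupp.degree_apply, Finset.card_eq_sum_ones]
  refine Finset.sum_le_sum fun s hs => ?_
  exact Nat.one_le_iff_ne_zero.mpr (Finsupp.mem_support_iff.mp hs)

/-- The coordinates of the class of a polynomial in `A` with respect to the basis of square-free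
monomials. -/
noncomputable def coords (S : Type) [DecidableEq S] : MvPolynomial S ℤ →ₗ[ℤ] (Finset S → ℤ) :=
  (basisMonomials S ℤ).constr ℤ fun m => Pi.single m.support ((-2) ^ (m.degree - m.support.card))

lemma coords_monomial [DecidableEq S] (m : S →₀ ℕ) (a : ℤ) :
    coords S (monomial m a) =
      a • (Pi.single m.support ((-2) ^ (m.degree - m.support.card)) : Finset S → ℤ) := by
  have h : monomial m a = a • basisMonomials S ℤ m := by
    simp [smul_monomial]
  rw [h, map_smul, coords, Module.Basis.constr_basis]

lemma coords_apply [DecidableEq S] (p : MvPolynomial S ℤ) (J : Finset S) :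
    coords S p J = ∑ m ∈ p.support,
      p.coeff m * if J = m.support then (-2) ^ (m.degree - m.support.card) else 0 := by
  conv_lhs => rw [p.as_sum]
  simp only [map_sum, coords_monomial, Finset.sum_apply, Pi.smul_apply, Pi.single_apply,
    smul_eq_mul]

lemma coords_eq_zero_of_mem [DecidableEq S] {p : MvPolynomial S ℤ} (hp : p ∈ relIdeal S) :
    coords S p = 0 := by
  have key : ∀ (s : S) (q : MvPolynomial S ℤ), coords S (q * (X s ^ 2 + 2 * X s)) = 0 := by
    intro s q
    induction q using MvPolynomial.induction_on' with
    | add p q hp hq => rw [add_mul, map_add, hp, hq, add_zero]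
    | monomial m a =>
      have h : monomial m a * (X s ^ 2 + 2 * X s) =
          monomial (m + Finsupp.single s 2) a + monomial (m + Finsupp.single s 1) (2 * a) := by
        rw [X_pow_eq_monomial, X, mul_add, monomial_mul, mul_one, mul_left_comm, monomial_mul,
          mul_one, two_mul, two_mul, map_add]
      have h2 : (m + Finsupp.single s 2).support = (m + Finsupp.single s 1).support := by
        ext t
        by_cases ht : s = t <;> simp [ht]
      have h1 := card_support_le_degree (m + Finsupp.single s 1)
      have hd1 : (m + Finsupp.single s 1).degree = m.degree + 1 := by
        simp
      have hd2 : (m + Finsupp.single s 2).degree = m.degree + 1 + 1 := by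
        simp
      rw [h, map_add, coords_monomial, coords_monomial, h2, hd2, ← hd1, Nat.sub_add_comm h1]
      ext J
      simp only [Pi.add_apply, Pi.smul_apply, Pi.single_apply, smul_eq_mul, Pi.zero_apply]
      split_ifs <;> ring
  suffices h : ∀ q, coords S (q * p) = 0 by simpa using h 1
  induction hp using Submodule.span_induction with
  | mem x hx =>
    obtain ⟨s, rfl⟩ := hx
    exact key s
  | zero => simp
  | add x y _ _ hx hy =>
    intro q
    rw [mul_add, map_add, hx, hy, add_zero]
  | smul a x _ hx =>
    intro q
    rw [smul_eq_mul, ← mul_assoc, hx]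

lemma mk_monomial (m : S →₀ ℕ) (a : ℤ) :
    Ideal.Quotient.mk (relIdeal S) (monomial m a) =
      Ideal.Quotient.mk (relIdeal S)
        (monomial (sqfree m.support) (a * (-2) ^ (m.degree - m.support.card))) := by
  have hsq : ∀ s : S, Ideal.Quotient.mk (relIdeal S) (X s) ^ 2 =
      -2 * Ideal.Quotient.mk (relIdeal S) (X s) := by
    intro s
    have h : Ideal.Quotient.mk (relIdeal S) (X s ^ 2 + 2 * X s) = 0 :=
      Ideal.Quotient.eq_zero_iff_mem.mpr (Ideal.subset_span ⟨s, rfl⟩)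
    rw [map_add, map_mul, map_pow, map_ofNat] at h
    linear_combination h
  have hpow : ∀ (s : S) (n : ℕ), Ideal.Quotient.mk (relIdeal S) (X s) ^ (n + 1) =
      (-2) ^ n * Ideal.Quotient.mk (relIdeal S) (X s) := by
    intro s n
    induction n with
    | zero => simp
    | succ n ih =>
      rw [pow_succ, ih, pow_succ]
      linear_combination (-2) ^ n * hsq s
  have hmon : ∀ (n : S →₀ ℕ) (b : ℤ), Ideal.Quotient.mk (relIdeal S) (monomial n b) =
      Ideal.Quotient.mk (relIdeal S) (C b) *
        ∏ s ∈ n.support, Ideal.Quotient.mk (relIdeal S) (X s) ^ n s := by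
    intro n b
    rw [monomial_eq, map_mul, Finsupp.prod, map_prod]
    simp only [map_pow]
  have hdeg : ∑ s ∈ m.support, (m s - 1) = m.degree - m.support.card := by
    rw [Finset.sum_tsub_distrib, Finsupp.degree_apply, Finset.card_eq_sum_ones]
    intro s hs
    exact Nat.one_le_iff_ne_zero.mpr (Finsupp.mem_support_iff.mp hs)
  have h1 : ∏ s ∈ m.support, Ideal.Quotient.mk (relIdeal S) (X s) ^ m s =
      (-2) ^ (m.degree - m.support.card) *
        ∏ s ∈ m.support, Ideal.Quotient.mk (relIdeal S) (X s) := by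
    rw [← hdeg, ← Finset.prod_pow_eq_pow_sum, ← Finset.prod_mul_distrib]
    refine Finset.prod_congr rfl fun s hs => ?_
    have hs' : m s ≠ 0 := Finsupp.mem_support_iff.mp hs
    rw [← hpow, Nat.sub_add_cancel (Nat.one_le_iff_ne_zero.mpr hs')]
  have h2 : ∏ s ∈ m.support, Ideal.Quotient.mk (relIdeal S) (X s) ^ sqfree m.support s =
      ∏ s ∈ m.support, Ideal.Quotient.mk (relIdeal S) (X s) := by
    refine Finset.prod_congr rfl fun s hs => ?_
    rw [sqfree, Finsupp.indicator_of_mem hs, pow_one]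
  rw [hmon, hmon, support_sqfree, h1, h2]
  simp only [map_mul, map_pow, map_neg, map_ofNat, mul_assoc]

/-- The square-free polynomial with prescribed coefficients. -/
noncomputable def ofCoords [Fintype S] [DecidableEq S] (c : Finset S → ℤ) : MvPolynomial S ℤ :=
  ∑ J, monomial (sqfree J) (c J)

lemma coords_ofCoords [Fintype S] [DecidableEq S] (c : Finset S → ℤ) :
    coords S (ofCoords c) = c := by
  ext J
  simp [ofCoords, coords_monomial, support_sqfree, degree_sqfree, Pi.single_apply]

lemma ofCoords_add [Fintype S] [DecidableEq S] (c d : Finset S → ℤ) :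
    ofCoords (c + d) = ofCoords c + ofCoords d := by
  simp [ofCoords, Finset.sum_add_distrib]

lemma mk_ofCoords_coords [Fintype S] [DecidableEq S] (p : MvPolynomial S ℤ) :
    Ideal.Quotient.mk (relIdeal S) (ofCoords (coords S p)) = Ideal.Quotient.mk (relIdeal S) p := by
  induction p using MvPolynomial.induction_on' with
  | add p q hp hq => rw [map_add, ofCoords_add, map_add, map_add, hp, hq]
  | monomial m a =>
    rw [mk_monomial, ofCoords, Finset.sum_eq_single m.support]
    · simp [coords_monomial]
    · intro J _ hJ
      simp [coords_monomial, hJ]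
    · simp

/-! ### Powers of the augmentation ideal -/

lemma augIdeal_pow (k : ℕ) :
    augIdeal S ^ k = (idealOfVars S ℤ ^ k).map (Ideal.Quotient.mk (relIdeal S)) := by
  rw [Ideal.map_pow, idealOfVars, Ideal.map_span, ← Set.range_comp]
  rfl

/-- For `s ∈ J`, the monomial `x_J x_s ^ n` of degree `|J| + n` equals `(-2) ^ n x_J`. Hence
`2 ^ n x_J ∈ 𝔞 ^ (|J| + n)`. The exponent `k - |J|` is truncated at zero. -/
lemma mk_sqfree_mem {k : ℕ} {J : Finset S} (hJ : J.Nonempty) {a : ℤ}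
    (ha : 2 ^ (k - J.card) ∣ a) :
    Ideal.Quotient.mk (relIdeal S) (monomial (sqfree J) a) ∈ augIdeal S ^ k := by
  classical
  obtain ⟨s, hs⟩ := hJ
  obtain ⟨b, rfl⟩ := ha
  set n := k - J.card with hn
  have hsupp : (sqfree J + Finsupp.single s n).support = J := by
    ext t
    by_cases ht : t ∈ J
    · simp [sqfree, ht]
    · have : s ≠ t := fun h => ht (h ▸ hs)
      simp [sqfree, ht, this]
  have hdeg : (sqfree J + Finsupp.single s n).degree = J.card + n := by
    simp [degree_sqfree]
  have h := mk_monomial (sqfree J + Finsupp.single s n) ((-1) ^ n * b)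
  rw [hsupp, hdeg, Nat.add_sub_cancel_left] at h
  have he : (-1) ^ n * b * (-2) ^ n = 2 ^ n * b := by
    rw [mul_right_comm, ← mul_pow]
    norm_num
  rw [he] at h
  rw [← h, augIdeal_pow]
  refine Ideal.mem_map_of_mem _ ?_
  rw [mem_pow_idealOfVars_iff]
  intro x hx
  rw [Finset.mem_singleton.mp (support_monomial_subset hx), hdeg]
  omega

/-- The powers of `𝔞` in coordinates. -/
lemma mk_mem_augIdeal_pow_iff [Fintype S] [DecidableEq S] (k : ℕ) (p : MvPolynomial S ℤ) :
    Ideal.Quotient.mk (relIdeal S) p ∈ augIdeal S ^ k ↔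
      (k ≠ 0 → coords S p ∅ = 0) ∧
        ∀ J : Finset S, J.Nonempty → 2 ^ (k - J.card) ∣ coords S p J := by
  constructor
  · intro hp
    rw [augIdeal_pow, Ideal.mem_map_iff_of_surjective _ Ideal.Quotient.mk_surjective] at hp
    obtain ⟨q, hq, hqp⟩ := hp
    rw [mem_pow_idealOfVars_iff] at hq
    have hc : coords S p = coords S q := by
      have h := coords_eq_zero_of_mem (Ideal.Quotient.eq.mp hqp)
      rw [map_sub, sub_eq_zero] at h
      exact h.symm
    rw [hc]
    constructor
    · intro hk
      rw [coords_apply]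
      refine Finset.sum_eq_zero fun m hm => ?_
      rw [if_neg, mul_zero]
      intro h0
      have := hq m hm
      rw [Finsupp.support_eq_empty.mp h0.symm] at this
      simp at this
      exact hk this
    · intro J hJ
      rw [coords_apply]
      refine Finset.dvd_sum fun m hm => Dvd.dvd.mul_left ?_ _
      split_ifs with h
      · rw [h]
        have h2 : (2 : ℤ) ^ (m.degree - m.support.card) ∣ (-2) ^ (m.degree - m.support.card) :=
          pow_dvd_pow_of_dvd (by norm_num) _
        exact (pow_dvd_pow 2 (Nat.sub_le_sub_right (hq m hm) _)).trans h2
      · exact dvd_zero _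
  · rintro ⟨h0, h⟩
    rcases Nat.eq_zero_or_pos k with rfl | hk
    · simp
    rw [← mk_ofCoords_coords, ofCoords, map_sum]
    refine Ideal.sum_mem _ fun J _ => ?_
    rcases J.eq_empty_or_nonempty with rfl | hJ
    · simp [h0 hk.ne']
    · exact mk_sqfree_mem hJ (h J hJ)

/-- The class of a polynomial in `A / 𝔞 ^ k`, the `k`-th term of the inverse system defining the
completion. -/
noncomputable def levelMk (k : ℕ) (p : MvPolynomial S ℤ) :
    augRing S ⧸ (augIdeal S ^ k • ⊤ : Submodule (augRing S) (augRing S)) :=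
  Submodule.Quotient.mk (Ideal.Quotient.mk (relIdeal S) p)

lemma levelMk_add (k : ℕ) (p q : MvPolynomial S ℤ) :
    levelMk k (p + q) = levelMk k p + levelMk k q := by
  rw [levelMk, map_add, Submodule.Quotient.mk_add]
  rfl

lemma levelMk_eq_iff [Fintype S] [DecidableEq S] (k : ℕ) (p q : MvPolynomial S ℤ) :
    levelMk k p = levelMk k q ↔
      (k ≠ 0 → coords S p ∅ = coords S q ∅) ∧
        ∀ J : Finset S, J.Nonempty → 2 ^ (k - J.card) ∣ coords S p J - coords S q J := by
  rw [levelMk, levelMk, Submodule.Quotient.eq, ← map_sub, smul_eq_mul, Ideal.mul_top, mk_mem_augIdeal_pow_iff]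
  simp only [map_sub, Pi.sub_apply, sub_eq_zero]

/-! ### The completion -/

lemma two_pow_dvd_sub_appr (x : ℤ_[2]) (k : ℕ) : (2 : ℤ_[2]) ^ k ∣ x - x.appr k := by
  have h := PadicInt.appr_spec k x
  rw [Ideal.mem_span_singleton] at h
  exact_mod_cast h

lemma two_pow_dvd_cast_iff (n : ℕ) (a : ℤ) : (2 : ℤ_[2]) ^ n ∣ (a : ℤ_[2]) ↔ (2 : ℤ) ^ n ∣ a := by
  have h := PadicInt.pow_p_dvd_int_iff (p := 2) n a
  exact_mod_cast h

/-- Integer coordinates approximating `x = (z, f)`: `z` at `∅`, and at a nonempty `J` an integer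
congruent to `f_J` modulo `2 ^ k`. -/
noncomputable def approx [DecidableEq S] (x : ℤ × ({J : Finset S // J.Nonempty} → ℤ_[2])) (k : ℕ)
    (J : Finset S) : ℤ :=
  if h : J.Nonempty then ((x.2 ⟨J, h⟩).appr k : ℤ) else x.1

lemma approx_empty [DecidableEq S] (x : ℤ × ({J : Finset S // J.Nonempty} → ℤ_[2])) (k : ℕ) :
    approx x k ∅ = x.1 := by
  simp [approx]

lemma two_pow_dvd_sub_approx [DecidableEq S] (x : ℤ × ({J : Finset S // J.Nonempty} → ℤ_[2]))
    {j k : ℕ} (hjk : j ≤ k) {J : Finset S} (hJ : J.Nonempty) :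
    (2 : ℤ_[2]) ^ j ∣ x.2 ⟨J, hJ⟩ - (approx x k J : ℤ) := by
  rw [approx, dif_pos hJ, Int.cast_natCast]
  exact (pow_dvd_pow 2 hjk).trans (two_pow_dvd_sub_appr _ k)

/-- The homomorphism `(z, f) ↦ z + ∑_J f_J x_J` into the completion. Integer representatives of
`f_J` modulo `2 ^ k` are chosen at level `k`; they need not be additive in `f_J`, but `2 ^ k x_J`
lies in `𝔞 ^ k`. -/
noncomputable def toCompletion (S : Type) [Fintype S] [DecidableEq S] :
    ℤ × ({J : Finset S // J.Nonempty} → ℤ_[2]) →+ AdicCompletion (augIdeal S) (augRing S) :=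
  AddMonoidHom.mk'
    (fun x => ⟨fun k => levelMk k (ofCoords (approx x k)), by
      intro m n hmn
      refine (levelMk_eq_iff m _ _).mpr ⟨fun _ => ?_, fun J hJ => ?_⟩
      · rw [coords_ofCoords, coords_ofCoords, approx_empty, approx_empty]
      · rw [coords_ofCoords, coords_ofCoords, ← two_pow_dvd_cast_iff]
        have h1 := two_pow_dvd_sub_approx x (show m - J.card ≤ m by omega) hJ
        have h2 := two_pow_dvd_sub_approx x (show m - J.card ≤ n by omega) hJ
        convert dvd_sub h1 h2 using 1
        push_cast
        ring⟩)
    (by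
      intro x y
      refine AdicCompletion.ext fun k => ?_
      change levelMk k (ofCoords (approx (x + y) k)) =
        levelMk k (ofCoords (approx x k)) + levelMk k (ofCoords (approx y k))
      rw [← levelMk_add, ← ofCoords_add, levelMk_eq_iff, coords_ofCoords,
        coords_ofCoords]
      refine ⟨fun _ => ?_, fun J hJ => ?_⟩
      · simp only [Pi.add_apply, approx_empty, Prod.fst_add]
      · rw [← two_pow_dvd_cast_iff]
        have h1 := two_pow_dvd_sub_approx x (show k - J.card ≤ k by omega) hJ
        have h2 := two_pow_dvd_sub_approx y (show k - J.card ≤ k by omega) hJ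
        have h3 := two_pow_dvd_sub_approx (x + y) (show k - J.card ≤ k by omega) hJ
        convert dvd_sub (dvd_add h1 h2) h3 using 1
        simp only [Pi.add_apply, Prod.snd_add]
        push_cast
        ring)

lemma toCompletion_val [Fintype S] [DecidableEq S]
    (x : ℤ × ({J : Finset S // J.Nonempty} → ℤ_[2])) (k : ℕ) :
    (toCompletion S x).val k = levelMk k (ofCoords (approx x k)) := rfl

lemma toCompletion_injective [Fintype S] [DecidableEq S] :
    Function.Injective (toCompletion S) := by
  intro x y hxy
  have h : ∀ k, (k ≠ 0 → approx x k ∅ = approx y k ∅) ∧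
      ∀ J : Finset S, J.Nonempty → 2 ^ (k - J.card) ∣ approx x k J - approx y k J := by
    intro k
    have hk : (toCompletion S x).val k = (toCompletion S y).val k := by rw [hxy]
    rw [toCompletion_val, toCompletion_val, levelMk_eq_iff, coords_ofCoords, coords_ofCoords] at hk
    exact hk
  refine Prod.ext ?_ (funext fun ⟨J, hJ⟩ => ?_)
  · simpa only [approx_empty] using (h 1).1 one_ne_zero
  · rw [← PadicInt.ext_of_toZModPow]
    intro n
    rw [← sub_eq_zero, ← map_sub, ← RingHom.mem_ker, PadicInt.ker_toZModPow,
      Ideal.mem_span_singleton, Nat.cast_ofNat]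
    have h1 := (two_pow_dvd_cast_iff _ _).mpr ((h (n + J.card)).2 J hJ)
    rw [Nat.add_sub_cancel] at h1
    have h2 := two_pow_dvd_sub_approx x (show n ≤ n + J.card by omega) hJ
    have h3 := two_pow_dvd_sub_approx y (show n ≤ n + J.card by omega) hJ
    convert dvd_add h1 (dvd_sub h2 h3) using 1
    push_cast
    ring

lemma exists_padicInt_of_two_pow_dvd_sub (a : ℕ → ℤ) (ha : ∀ i, 2 ^ i ∣ a (i + 1) - a i) :
    ∃ x : ℤ_[2], ∀ n, (2 : ℤ_[2]) ^ n ∣ x - a n := by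
  refine ⟨PadicInt.ofIntSeq _ (PadicInt.isCauSeq_padicNorm_of_pow_dvd_sub a 2 ha), fun n => ?_⟩
  have h := PadicInt.toZModPow_ofIntSeq_of_pow_dvd_sub a 2 ha n
  rw [← map_intCast (PadicInt.toZModPow (p := 2) n), ← sub_eq_zero, ← map_sub, ← RingHom.mem_ker,
    PadicInt.ker_toZModPow, Ideal.mem_span_singleton] at h
  exact_mod_cast h

lemma toCompletion_surjective [Fintype S] [DecidableEq S] :
    Function.Surjective (toCompletion S) := by
  intro y
  have hex : ∀ k, ∃ p : MvPolynomial S ℤ, y.val k = levelMk k p := by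
    intro k
    obtain ⟨a, ha⟩ := Submodule.Quotient.mk_surjective _ (y.val k)
    obtain ⟨p, rfl⟩ := Ideal.Quotient.mk_surjective a
    exact ⟨p, ha.symm⟩
  choose p hp using hex
  have hcompat : ∀ {m n : ℕ}, m ≤ n → (m ≠ 0 → coords S (p n) ∅ = coords S (p m) ∅) ∧
      ∀ J : Finset S, J.Nonempty → 2 ^ (m - J.card) ∣ coords S (p n) J - coords S (p m) J := by
    intro m n hmn
    have h := y.property hmn
    rw [hp, hp] at h
    exact (levelMk_eq_iff m _ _).mp h
  -- Only from level `n + |J|` on is the coordinate at `J` determined modulo `2 ^ n`.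
  have hlim : ∀ J : {J : Finset S // J.Nonempty}, ∃ x : ℤ_[2],
      ∀ n, (2 : ℤ_[2]) ^ n ∣ x - (coords S (p (n + J.1.card)) J.1 : ℤ) := by
    intro J
    refine exists_padicInt_of_two_pow_dvd_sub (fun n => coords S (p (n + J.1.card)) J.1) fun i => ?_
    have h := (hcompat (show i + J.1.card ≤ i + 1 + J.1.card by omega)).2 J.1 J.2
    rwa [Nat.add_sub_cancel] at h
  choose f hf using hlim
  refine ⟨(coords S (p 1) ∅, f), AdicCompletion.ext fun k => ?_⟩
  rw [toCompletion_val, hp, levelMk_eq_iff, coords_ofCoords]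
  refine ⟨fun hk => ?_, fun J hJ => ?_⟩
  · rw [approx_empty]
    exact ((hcompat (Nat.one_le_iff_ne_zero.mpr hk)).1 one_ne_zero).symm
  · rcases le_total k J.card with hle | hle
    · simp [Nat.sub_eq_zero_of_le hle]
    · rw [← two_pow_dvd_cast_iff]
      have h1 := hf ⟨J, hJ⟩ (k - J.card)
      rw [Nat.sub_add_cancel hle] at h1
      have h2 := two_pow_dvd_sub_approx (coords S (p 1) ∅, f)
        (show k - J.card ≤ k by omega) hJ
      convert dvd_sub h1 h2 using 1
      push_cast
      ring

end AugCompletion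

/-- The `𝔞`-adic completion of `A = ℤ[X_s]/(X_s² + 2X_s)` is isomorphic,
as an abelian group, to `ℤ × ∏_J ℤ₂`, the product over the nonempty subsets `J ⊆ S` of
copies of the 2-adic integers. -/
theorem adicCompletion_iso (S : Type) [Fintype S] [DecidableEq S] :
    Nonempty (AdicCompletion (augIdeal S) (augRing S) ≃+
      ℤ × ({J : Finset S // J.Nonempty} → ℤ_[2])) := by
  exact ⟨(AddEquiv.ofBijective (AugCompletion.toCompletion S)
    ⟨AugCompletion.toCompletion_injective, AugCompletion.toCompletion_surjective⟩).symm⟩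
end

section
/- Let Γ be a finite simple graph with vertex set S, let A := ℤ[X_s : s ∈ S]/(X_s² + 2X_s for s ∈ S, and X_s X_t for all pairs of distinct non-adjacent vertices s, t), and let 𝔞 ⊆ A be the ideal generated by the images of the variables X_s. Then the 𝔞-adic completion of A is isomorphic, as an abelian group, to ℤ × ∏_{J} ℤ₂, where J ranges over the nonempty cliques of Γ and ℤ₂ denotes the ring of 2-adic integers. -/
/-!
Write `X_J` for the product of the `X_s` with `s ∈ J`. In `A` a monomial `X^m` of degree `d` whose
support is `J` equals `(-2)^(d - |J|) X_J`, and `X_J = 0` when `J` is not a clique. Hence `A` is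
spanned over `ℤ` by the `X_J` with `J` a clique, and they form a basis: the functional `coeffJ J`
that sends `X^m` to `(-2)^(d - |J|)` if its support is `J`, and to `0` otherwise, vanishes on the
ideal of relations whenever `J` is a clique (`coeffJ_eq_zero_of_mem`, `mk_eq_sum`).

In these coordinates the `𝔞`-adic topology is the discrete one on the coefficient of `X_∅ = 1` and
the 2-adic one on the others. For `n > 0`, the elements of `𝔞 ^ n` have coefficient `0` at `∅` and
all coefficients divisible by `2 ^ (n - |S|)` (`dvd_coeffJ`, `coeffJ_empty_eq_zero`, gathered in
`coeffJ_of_mem`). Conversely, coefficient `0` at `∅` and divisibility by `2 ^ n` at the nonempty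
cliques force membership in `𝔞 ^ n` (`mk_mem_of_dvd`), because `X_s ^ (n + 1) = (-2) ^ n X_s`.

The isomorphism is built from `ℤ × ∏_J ℤ₂` to the completion (`toCompletion`): modulo `𝔞 ^ n`, the
image of `(a, (y_J))` is `a + ∑_J y_{J,n} X_J` for integers `y_{J,n} ≡ y_J` modulo `2 ^ n`.
It is injective since `ℤ₂` is 2-adically separated, and surjective since `ℤ₂` is 2-adically
complete.
-/

open MvPolynomial

/-- The ideal of relations `X_s² + 2X_s` for all `s ∈ S`, together with `X_s X_t` for
all pairs of distinct non-adjacent vertices `s, t` of `Γ`. -/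
noncomputable def coxKIdeal {S : Type} (Γ : SimpleGraph S) : Ideal (MvPolynomial S ℤ) :=
  Ideal.span ({p : MvPolynomial S ℤ | ∃ s : S, p = X s ^ 2 + 2 * X s} ∪
    {p : MvPolynomial S ℤ | ∃ s t : S, s ≠ t ∧ ¬ Γ.Adj s t ∧ p = X s * X t})

/-- The ring `A = ℤ[X_s : s ∈ S]/(X_s² + 2X_s, X_s X_t)`. -/
noncomputable abbrev coxKRing {S : Type} (Γ : SimpleGraph S) : Type :=
  MvPolynomial S ℤ ⧸ coxKIdeal Γ

/-- The ideal `𝔞 ⊆ A` generated by the images of the variables `X_s`. -/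
noncomputable def coxKAugIdeal {S : Type} (Γ : SimpleGraph S) : Ideal (coxKRing Γ) :=
  Ideal.span (Set.range fun s : S => Ideal.Quotient.mk (coxKIdeal Γ) (X s))

namespace CoxK

open Finsupp

variable {S : Type}

/-! ### Coefficients of squarefree monomials -/

theorem card_support_le_degree (m : S →₀ ℕ) : m.support.card ≤ m.degree := by
  rw [degree_apply, Finset.card_eq_sum_ones]
  refine Finset.sum_le_sum fun i hi => ?_
  exact Nat.one_le_iff_ne_zero.2 (by simpa using hi)

open Classical in
/-- The coefficient at `X_J` of the monomial `X^m`, once `X_s²` is reduced to `-2 X_s`. The truncated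
subtraction is harmless: if `J` is the support of `m`, then `|J| ≤ deg m`. -/
noncomputable def weight (J : Finset S) (m : S →₀ ℕ) : ℤ :=
  if m.support = J then (-2) ^ (m.degree - J.card) else 0

/-- The `ℤ`-linear functional on polynomials reading off the coefficient at `X_J` modulo the relations
`X_s² = -2 X_s`. -/
noncomputable def coeffJ (J : Finset S) : MvPolynomial S ℤ →ₗ[ℤ] ℤ :=
  (basisMonomials S ℤ).constr ℤ (weight J)

theorem coeffJ_monomial (J : Finset S) (m : S →₀ ℕ) (a : ℤ) :
    coeffJ J (monomial m a) = a * weight J m := by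
  have h : (monomial m a : MvPolynomial S ℤ) = a • basisMonomials S ℤ m := by
    simp [smul_monomial]
  rw [h, map_smul, coeffJ, Module.Basis.constr_basis, smul_eq_mul]

theorem coeffJ_eq_sum (J : Finset S) (p : MvPolynomial S ℤ) :
    coeffJ J p = ∑ m ∈ p.support, p.coeff m * weight J m := by
  conv_lhs => rw [p.as_sum, map_sum]
  simp [coeffJ_monomial]

theorem support_add_single [DecidableEq S] (m : S →₀ ℕ) (s : S) {k : ℕ} (hk : k ≠ 0) :
    (m + single s k).support = insert s m.support := by
  ext t
  by_cases h : t = s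
  · subst h; simp [hk]
  · simp [h]

theorem coeffJ_mul_rel₁ (J : Finset S) (s : S) (q : MvPolynomial S ℤ) :
    coeffJ J (q * (X s ^ 2 + 2 * X s)) = 0 := by
  classical
  induction q using MvPolynomial.induction_on' with
  | add p q hp hq => rw [add_mul, map_add, hp, hq, add_zero]
  | monomial m a =>
    have h : (monomial m a : MvPolynomial S ℤ) * (X s ^ 2 + 2 * X s) =
        monomial (m + single s 2) a + (2 : ℤ) • monomial (m + single s 1) a := by
      rw [mul_add, X_pow_eq_monomial, monomial_mul, mul_one, mul_left_comm, X, monomial_mul,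
        mul_one, zsmul_eq_mul]
      norm_cast
    rw [h, map_add, map_smul, coeffJ_monomial, coeffJ_monomial, weight, weight,
      support_add_single m s two_ne_zero, support_add_single m s one_ne_zero]
    split_ifs with hJ
    · have h1 : J.card ≤ m.degree + 1 := by
        rw [← hJ]
        exact (Finset.card_insert_le _ _).trans (by have := card_support_le_degree m; omega)
      rw [map_add, map_add, degree_single, degree_single,
        show m.degree + 2 - J.card = (m.degree + 1 - J.card) + 1 by omega, pow_succ, smul_eq_mul]
      ring
    · simp

theorem coeffJ_mul_rel₂ {Γ : SimpleGraph S} {J : Finset S} (hJ : Γ.IsClique (J : Set S)) {s t : S}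
    (hst : s ≠ t) (hadj : ¬ Γ.Adj s t) (q : MvPolynomial S ℤ) :
    coeffJ J (q * (X s * X t)) = 0 := by
  classical
  induction q using MvPolynomial.induction_on' with
  | add p q hp hq => rw [add_mul, map_add, hp, hq, add_zero]
  | monomial m a =>
    rw [X, X, monomial_mul, monomial_mul, ← add_assoc, coeffJ_monomial, weight,
      support_add_single _ _ one_ne_zero, support_add_single _ _ one_ne_zero, if_neg, mul_zero]
    rintro rfl
    exact hadj (hJ (by simp) (by simp) hst)

theorem coeffJ_eq_zero_of_mem {Γ : SimpleGraph S} {J : Finset S} (hJ : Γ.IsClique (J : Set S))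
    {p : MvPolynomial S ℤ} (hp : p ∈ coxKIdeal Γ) : coeffJ J p = 0 := by
  suffices h : ∀ q, coeffJ J (q * p) = 0 by simpa using h 1
  unfold coxKIdeal at hp
  induction hp using Submodule.span_induction with
  | mem x hx =>
    rintro q
    rcases hx with ⟨s, rfl⟩ | ⟨s, t, hst, hadj, rfl⟩
    · exact coeffJ_mul_rel₁ J s q
    · exact coeffJ_mul_rel₂ hJ hst hadj q
  | zero => simp
  | add x y _ _ hx hy => intro q; rw [mul_add, map_add, hx, hy, add_zero]
  | smul a x _ hx => intro q; rw [smul_eq_mul, ← mul_assoc, hx]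

/-- A monomial of degree at least `n` with support `J` has weight `± 2 ^ (deg - |J|)`, and
`|J| ≤ |S|`. -/
theorem dvd_coeffJ [Fintype S] (J : Finset S) {n : ℕ} {p : MvPolynomial S ℤ}
    (hp : p ∈ idealOfVars S ℤ ^ n) : (2 : ℤ) ^ (n - Fintype.card S) ∣ coeffJ J p := by
  rw [mem_pow_idealOfVars_iff] at hp
  rw [coeffJ_eq_sum]
  refine Finset.dvd_sum fun m hm => Dvd.dvd.mul_left ?_ _
  unfold weight
  split_ifs with h
  · have h1 := hp m hm
    have h2 := J.card_le_univ
    rw [neg_pow]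
    exact Dvd.dvd.mul_left (pow_dvd_pow _ (by omega)) _
  · simp

theorem coeffJ_empty_eq_zero {n : ℕ} (hn : n ≠ 0) {p : MvPolynomial S ℤ}
    (hp : p ∈ idealOfVars S ℤ ^ n) : coeffJ ∅ p = 0 := by
  rw [mem_pow_idealOfVars_iff] at hp
  rw [coeffJ_eq_sum]
  refine Finset.sum_eq_zero fun m hm => ?_
  have h1 := hp m hm
  rw [weight, if_neg, mul_zero]
  intro h
  rw [Finsupp.support_eq_empty] at h
  simp [h] at h1
  exact hn h1

theorem coxKAugIdeal_eq_map (Γ : SimpleGraph S) :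
    coxKAugIdeal Γ = (idealOfVars S ℤ).map (Ideal.Quotient.mk (coxKIdeal Γ)) := by
  rw [coxKAugIdeal, idealOfVars, Ideal.map_span, ← Set.range_comp]
  rfl

/-- An element of `𝔞 ^ n` has a representative in the `n`-th power of the ideal of variables, with the
same coefficients at all cliques. -/
theorem exists_of_mk_mem {Γ : SimpleGraph S} {n : ℕ} {p : MvPolynomial S ℤ}
    (hp : Ideal.Quotient.mk (coxKIdeal Γ) p ∈ coxKAugIdeal Γ ^ n) :
    ∃ q ∈ idealOfVars S ℤ ^ n, ∀ J : Finset S, Γ.IsClique (J : Set S) →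
      coeffJ J p = coeffJ J q := by
  rw [coxKAugIdeal_eq_map, ← Ideal.map_pow, Ideal.mem_map_iff_of_surjective _
    Ideal.Quotient.mk_surjective] at hp
  obtain ⟨q, hq, h⟩ := hp
  refine ⟨q, hq, fun J hJ => ?_⟩
  rw [eq_comm, ← sub_eq_zero, ← map_sub]
  exact coeffJ_eq_zero_of_mem hJ ((Ideal.Quotient.eq).1 h)

/-! ### Spanning by squarefree monomials of cliques -/

variable (Γ : SimpleGraph S)

/-- The image of `X_s` in `A`. -/
noncomputable abbrev gen (s : S) : coxKRing Γ := Ideal.Quotient.mk (coxKIdeal Γ) (X s)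

theorem gen_mem (s : S) : gen Γ s ∈ coxKAugIdeal Γ := by
  unfold coxKAugIdeal
  exact Ideal.subset_span ⟨s, rfl⟩

theorem gen_sq (s : S) : gen Γ s * gen Γ s = -2 * gen Γ s := by
  have h : Ideal.Quotient.mk (coxKIdeal Γ) (X s ^ 2 + 2 * X s) = 0 :=
    Ideal.Quotient.eq_zero_iff_mem.2 (Ideal.subset_span (Or.inl ⟨s, rfl⟩))
  simp only [map_add, map_pow, map_mul, map_ofNat] at h
  linear_combination h

theorem gen_pow (s : S) (k : ℕ) : gen Γ s ^ (k + 1) = (-2) ^ k * gen Γ s := by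
  induction k with
  | zero => simp
  | succ k ih => rw [pow_succ, ih, mul_assoc, gen_sq, pow_succ, mul_assoc]

theorem gen_mul_gen {s t : S} (hst : s ≠ t) (h : ¬ Γ.Adj s t) : gen Γ s * gen Γ t = 0 := by
  rw [← map_mul]
  exact Ideal.Quotient.eq_zero_iff_mem.2 (Ideal.subset_span (Or.inr ⟨s, t, hst, h, rfl⟩))

theorem prod_gen_eq_zero {J : Finset S} (hJ : ¬ Γ.IsClique (J : Set S)) :
    ∏ s ∈ J, gen Γ s = 0 := by
  classical
  simp only [SimpleGraph.IsClique, Set.Pairwise, not_forall] at hJ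
  obtain ⟨s, hs, t, ht, hst, hadj⟩ := hJ
  rw [← Finset.mul_prod_erase J _ hs,
    ← Finset.mul_prod_erase (J.erase s) _ (Finset.mem_erase.2 ⟨hst.symm, ht⟩), ← mul_assoc,
    gen_mul_gen Γ hst hadj, zero_mul]

theorem mk_monomial (m : S →₀ ℕ) (a : ℤ) :
    Ideal.Quotient.mk (coxKIdeal Γ) (monomial m a) =
      (a * (-2) ^ (m.degree - m.support.card) : ℤ) * ∏ s ∈ m.support, gen Γ s := by
  have h1 : ∀ s ∈ m.support, gen Γ s ^ m s = (-2) ^ (m s - 1) * gen Γ s := by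
    intro s hs
    rw [← gen_pow, Nat.sub_add_cancel (Nat.one_le_iff_ne_zero.2 (by simpa using hs))]
  have h2 : ∑ s ∈ m.support, (m s - 1) = m.degree - m.support.card := by
    rw [degree_apply, Finset.card_eq_sum_ones, Finset.sum_tsub_distrib]
    intro s hs
    exact Nat.one_le_iff_ne_zero.2 (by simpa using hs)
  rw [monomial_eq, map_mul, Finsupp.prod, map_prod]
  simp only [map_pow]
  rw [Finset.prod_congr rfl h1, Finset.prod_mul_distrib, Finset.prod_pow_eq_pow_sum, h2]
  push_cast
  rw [← mul_assoc]
  congr 2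

open Classical in
/-- The squarefree monomials indexed by cliques span `A`, with coefficients given by `coeffJ`. -/
theorem mk_eq_sum [Fintype S] (p : MvPolynomial S ℤ) :
    Ideal.Quotient.mk (coxKIdeal Γ) p =
      ∑ J ∈ (Finset.univ : Finset (Finset S)).filter (fun J : Finset S => Γ.IsClique (J : Set S)),
        (coeffJ J p : coxKRing Γ) * ∏ s ∈ J, gen Γ s := by
  induction p using MvPolynomial.induction_on' with
  | add p q hp hq => simp only [map_add, Int.cast_add, add_mul, Finset.sum_add_distrib, hp, hq]
  | monomial m a =>
    by_cases hm : Γ.IsClique (m.support : Set S)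
    · rw [Finset.sum_eq_single m.support]
      · rw [mk_monomial, coeffJ_monomial, weight, if_pos rfl]
      · intro J _ hJ
        rw [coeffJ_monomial, weight, if_neg hJ.symm]
        simp
      · simp [hm]
    · rw [mk_monomial, prod_gen_eq_zero Γ hm, mul_zero, Finset.sum_eq_zero]
      intro J hJ
      rw [coeffJ_monomial, weight, if_neg]
      · simp
      · rintro rfl
        simp [hm] at hJ

theorem mul_prod_gen_mem {J : Finset S} (hJ : J.Nonempty) {n : ℕ} {z : ℤ} (hz : (2 : ℤ) ^ n ∣ z) :
    (z : coxKRing Γ) * ∏ s ∈ J, gen Γ s ∈ coxKAugIdeal Γ ^ n := by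
  classical
  obtain ⟨s, hs⟩ := hJ
  obtain ⟨w, rfl⟩ := hz
  rw [← Finset.mul_prod_erase J _ hs]
  refine Ideal.mem_of_dvd _ (Dvd.intro ((-1) ^ n * w * ∏ t ∈ J.erase s, gen Γ t) ?_)
    (Ideal.pow_le_pow_right n.le_succ (Ideal.pow_mem_pow (gen_mem Γ s) (n + 1)))
  have h2 : ((-1) ^ n * (-2) ^ n : coxKRing Γ) = 2 ^ n := by rw [← mul_pow]; norm_num
  rw [gen_pow]
  push_cast
  linear_combination ((w : coxKRing Γ) * gen Γ s * ∏ t ∈ J.erase s, gen Γ t) * h2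

/-- A neighbourhood of `0` for the 2-adic topology on coefficients lies in `𝔞 ^ n`. -/
theorem mk_mem_of_dvd [Fintype S] {n : ℕ} {p : MvPolynomial S ℤ} (h0 : coeffJ ∅ p = 0)
    (h : ∀ J : Finset S, Γ.IsClique (J : Set S) → J.Nonempty → (2 : ℤ) ^ n ∣ coeffJ J p) :
    Ideal.Quotient.mk (coxKIdeal Γ) p ∈ coxKAugIdeal Γ ^ n := by
  classical
  rw [mk_eq_sum]
  refine Ideal.sum_mem _ fun J hJ => ?_
  rcases J.eq_empty_or_nonempty with rfl | hne
  · simp [h0]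
  · exact mul_prod_gen_mem Γ hne (h J (by simpa using hJ) hne)

theorem coeffJ_C_mul_prod (J K : Finset S) [Decidable (J = K)] (a : ℤ) :
    coeffJ K (C a * ∏ s ∈ J, X s) = if J = K then a else 0 := by
  classical
  have h : (C a * ∏ s ∈ J, X s : MvPolynomial S ℤ) = monomial (∑ s ∈ J, single s 1) a := by
    rw [monomial_sum_index]
    rfl
  have hs : (∑ s ∈ J, single s 1 : S →₀ ℕ).support = J := by
    ext t
    simp [Finsupp.finsetSum_apply, Finsupp.single_apply]
  have hd : (∑ s ∈ J, single s 1 : S →₀ ℕ).degree = J.card := by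
    simp [map_sum]
  rw [h, coeffJ_monomial, weight, hs, hd]
  split_ifs with hJ
  · simp [hJ]
  · simp

/-- The nonempty cliques of `Γ`. -/
abbrev Cl : Type := {J : Finset S // Γ.IsClique (J : Set S) ∧ J.Nonempty}

variable {Γ}

/-! ### The 2-adic integers -/

theorem two_pow_dvd_iff (n : ℕ) (a : ℤ) : (2 : ℤ_[2]) ^ n ∣ (a : ℤ_[2]) ↔ (2 : ℤ) ^ n ∣ a := by
  exact_mod_cast PadicInt.pow_p_dvd_int_iff (p := 2) n a

theorem appr_dvd (x : ℤ_[2]) (n : ℕ) : (2 : ℤ_[2]) ^ n ∣ x - (x.appr n : ℤ) := by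
  have := PadicInt.appr_spec n x
  rw [Ideal.mem_span_singleton] at this
  exact_mod_cast this

theorem eq_zero_of_two_pow_dvd {x : ℤ_[2]} (h : ∀ n : ℕ, (2 : ℤ_[2]) ^ n ∣ x) : x = 0 := by
  refine IsHausdorff.haus (I := Ideal.span {(2 : ℤ_[2])}) ?_ x fun n => ?_
  · have := (inferInstance : IsAdicComplete (IsLocalRing.maximalIdeal ℤ_[2]) ℤ_[2]).toIsHausdorff
    rw [PadicInt.maximalIdeal_eq_span_p] at this
    exact_mod_cast this
  · rw [SModEq.zero, smul_eq_mul, Ideal.mul_top, Ideal.span_singleton_pow,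
      Ideal.mem_span_singleton]
    exact h n

theorem exists_limit (f : ℕ → ℤ_[2]) (hf : ∀ m n, m ≤ n → (2 : ℤ_[2]) ^ m ∣ f m - f n) :
    ∃ L, ∀ n, (2 : ℤ_[2]) ^ n ∣ f n - L := by
  have := (inferInstance : IsAdicComplete (IsLocalRing.maximalIdeal ℤ_[2]) ℤ_[2]).toIsPrecomplete
  rw [PadicInt.maximalIdeal_eq_span_p] at this
  obtain ⟨L, hL⟩ := this.prec (f := f) (by
    intro m n hmn
    rw [SModEq.sub_mem, smul_eq_mul, Ideal.mul_top, Ideal.span_singleton_pow,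
      Ideal.mem_span_singleton]
    exact_mod_cast hf m n hmn)
  refine ⟨L, fun n => ?_⟩
  have h := hL n
  rw [SModEq.sub_mem, smul_eq_mul, Ideal.mul_top, Ideal.span_singleton_pow,
      Ideal.mem_span_singleton] at h
  exact_mod_cast h

/-- The shift `|S| + 1` of the exponent pays both for the loss of `|S|` powers of `2` in `dvd_coeffJ`
and for the positivity needed by `coeffJ_empty_eq_zero`. -/
theorem coeffJ_of_mem [Fintype S] {n : ℕ} {p : MvPolynomial S ℤ}
    (hp : Ideal.Quotient.mk (coxKIdeal Γ) p ∈
      (coxKAugIdeal Γ ^ (n + Fintype.card S + 1) • ⊤ : Ideal (coxKRing Γ))) :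
    coeffJ ∅ p = 0 ∧ ∀ J : Cl Γ, (2 : ℤ_[2]) ^ n ∣ (coeffJ J.1 p : ℤ_[2]) := by
  rw [smul_eq_mul, Ideal.mul_top] at hp
  obtain ⟨q, hq, h⟩ := exists_of_mk_mem hp
  refine ⟨(h ∅ (by simp)).trans (coeffJ_empty_eq_zero (by omega) hq), fun J => ?_⟩
  rw [h J.1 J.2.1, two_pow_dvd_iff]
  exact (pow_dvd_pow _ (by omega)).trans (dvd_coeffJ J.1 hq)

/-! ### The isomorphism -/

section

variable [Fintype (Cl Γ)]

/-- The polynomial `a + ∑_J y_{J,n} X_J`, where `y_{J,n} = (y_J).appr n` is the natural number below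
`2 ^ n` congruent to `y_J` modulo `2 ^ n`. -/
noncomputable def approx (y : ℤ × (Cl Γ → ℤ_[2])) (n : ℕ) : MvPolynomial S ℤ :=
  C y.1 + ∑ J : Cl Γ, C ((y.2 J).appr n : ℤ) * ∏ s ∈ J.1, X s

theorem coeffJ_empty_approx (y : ℤ × (Cl Γ → ℤ_[2])) (n : ℕ) :
    coeffJ ∅ (approx y n) = y.1 := by
  classical
  have h0 := coeffJ_C_mul_prod (∅ : Finset S) ∅ y.1
  rw [Finset.prod_empty, mul_one, if_pos rfl] at h0
  rw [approx, map_add, h0, map_sum, Finset.sum_eq_zero, add_zero]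
  intro J _
  rw [coeffJ_C_mul_prod, if_neg J.2.2.ne_empty]

theorem coeffJ_approx (y : ℤ × (Cl Γ → ℤ_[2])) (n : ℕ) (K : Cl Γ) :
    coeffJ K.1 (approx y n) = (y.2 K).appr n := by
  classical
  have h0 := coeffJ_C_mul_prod (∅ : Finset S) K.1 y.1
  rw [Finset.prod_empty, mul_one, if_neg K.2.2.ne_empty.symm] at h0
  rw [approx, map_add, h0, map_sum, zero_add, Finset.sum_eq_single K]
  · rw [coeffJ_C_mul_prod, if_pos rfl]
  · intro J _ hJ
    rw [coeffJ_C_mul_prod, if_neg fun h => hJ (Subtype.ext h)]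
  · simp

/-- A polynomial whose coefficients agree with `y` (exactly at `∅`, modulo `2 ^ n` elsewhere)
represents the same class as `approx y k` modulo `𝔞 ^ n`, for every `k ≥ n`. -/
theorem approx_sub_mem [Fintype S] {y : ℤ × (Cl Γ → ℤ_[2])} {n k : ℕ} (hnk : n ≤ k)
    {p : MvPolynomial S ℤ}
    (h0 : coeffJ ∅ p = y.1)
    (h : ∀ J : Cl Γ, (2 : ℤ_[2]) ^ n ∣ (coeffJ J.1 p : ℤ_[2]) - y.2 J) :
    Ideal.Quotient.mk (coxKIdeal Γ) p - Ideal.Quotient.mk (coxKIdeal Γ) (approx y k) ∈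
      (coxKAugIdeal Γ ^ n • ⊤ : Ideal (coxKRing Γ)) := by
  rw [smul_eq_mul, Ideal.mul_top, ← map_sub]
  refine mk_mem_of_dvd Γ (by rw [map_sub, h0, coeffJ_empty_approx, sub_self]) fun J hJ hne => ?_
  rw [map_sub, coeffJ_approx y k ⟨J, hJ, hne⟩, ← two_pow_dvd_iff]
  have := dvd_add (h ⟨J, hJ, hne⟩)
    ((pow_dvd_pow _ hnk).trans (appr_dvd (y.2 ⟨J, hJ, hne⟩) k))
  rw [sub_add_sub_cancel] at this
  exact_mod_cast this

theorem approx_dvd {y : ℤ × (Cl Γ → ℤ_[2])} (k : ℕ) (J : Cl Γ) :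
    (2 : ℤ_[2]) ^ k ∣ (coeffJ J.1 (approx y k) : ℤ_[2]) - y.2 J := by
  rw [coeffJ_approx, ← dvd_neg, neg_sub]
  exact appr_dvd _ _

theorem approx_compat [Fintype S] (y : ℤ × (Cl Γ → ℤ_[2])) {m n : ℕ} (hmn : m ≤ n) :
    AdicCompletion.transitionMap (coxKAugIdeal Γ) (coxKRing Γ) hmn
      (Submodule.mkQ _ (Ideal.Quotient.mk (coxKIdeal Γ) (approx y n))) =
      Submodule.mkQ _ (Ideal.Quotient.mk (coxKIdeal Γ) (approx y m)) := by
  refine (Submodule.Quotient.eq _).2 (approx_sub_mem le_rfl (coeffJ_empty_approx y n) fun J => ?_)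
  exact (pow_dvd_pow _ hmn).trans (approx_dvd n J)

theorem approx_add [Fintype S] (y z : ℤ × (Cl Γ → ℤ_[2])) (n : ℕ) :
    Submodule.mkQ (coxKAugIdeal Γ ^ n • ⊤ : Ideal (coxKRing Γ))
      (Ideal.Quotient.mk (coxKIdeal Γ) (approx (y + z) n)) =
    Submodule.mkQ _ (Ideal.Quotient.mk (coxKIdeal Γ) (approx y n)) +
      Submodule.mkQ _ (Ideal.Quotient.mk (coxKIdeal Γ) (approx z n)) := by
  rw [← map_add, eq_comm, ← map_add]
  refine (Submodule.Quotient.eq _).2 (approx_sub_mem le_rfl ?_ fun J => ?_)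
  · simp [coeffJ_empty_approx]
  · have := dvd_add (approx_dvd (y := y) n J) (approx_dvd (y := z) n J)
    rw [map_add, Int.cast_add, Prod.snd_add, Pi.add_apply, add_sub_add_comm]
    exact this

/-- The additive map `ℤ × ∏_J ℤ₂ → Â` whose component modulo `𝔞 ^ n` is the class of `approx y n`. -/
noncomputable def toCompletion [Fintype S] :
    ℤ × (Cl Γ → ℤ_[2]) →+ AdicCompletion (coxKAugIdeal Γ) (coxKRing Γ) :=
  AddMonoidHom.mk'
    (fun y => ⟨fun n => Submodule.mkQ _ (Ideal.Quotient.mk (coxKIdeal Γ) (approx y n)),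
      approx_compat y⟩)
    (fun y z => AdicCompletion.ext fun n => approx_add y z n)

theorem toCompletion_val [Fintype S] (y : ℤ × (Cl Γ → ℤ_[2])) (n : ℕ) :
    (toCompletion y).val n = Submodule.mkQ _ (Ideal.Quotient.mk (coxKIdeal Γ) (approx y n)) := rfl

theorem toCompletion_injective [Fintype S] : Function.Injective (toCompletion (Γ := Γ)) := by
  rw [injective_iff_map_eq_zero]
  intro y hy
  have key := fun n => coeffJ_of_mem (Γ := Γ) (n := n) (p := approx y _)
    ((Submodule.Quotient.mk_eq_zero _).1
      (congrArg (fun z => z.val (n + Fintype.card S + 1)) hy))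
  refine Prod.ext ?_ (funext fun J => eq_zero_of_two_pow_dvd fun n => ?_)
  · have := (key 0).1
    rwa [coeffJ_empty_approx] at this
  · have h1 := (key n).2 J
    have h2 := (pow_dvd_pow (2 : ℤ_[2]) (show n ≤ n + Fintype.card S + 1 by omega)).trans
      (approx_dvd (y := y) (n + Fintype.card S + 1) J)
    simpa using dvd_sub h1 h2

theorem toCompletion_surjective [Fintype S] : Function.Surjective (toCompletion (Γ := Γ)) := by
  intro x
  have hlift : ∀ n, ∃ p : MvPolynomial S ℤ,
      Submodule.mkQ _ (Ideal.Quotient.mk (coxKIdeal Γ) p) = x.val n := by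
    intro n
    obtain ⟨a, ha⟩ := Submodule.mkQ_surjective _ (x.val n)
    obtain ⟨p, rfl⟩ := Ideal.Quotient.mk_surjective a
    exact ⟨p, ha⟩
  choose p hp using hlift
  have hcomp : ∀ m n, m ≤ n → Ideal.Quotient.mk (coxKIdeal Γ) (p m) -
      Ideal.Quotient.mk (coxKIdeal Γ) (p n) ∈
        (coxKAugIdeal Γ ^ m • ⊤ : Ideal (coxKRing Γ)) := by
    intro m n hmn
    have h := x.property hmn
    rw [← hp m, ← hp n] at h
    exact (Submodule.Quotient.eq _).1 h.symm
  -- Shifting the lifts by `N` makes their coefficients at `J` 2-adically Cauchy with modulus `id`.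
  set N := Fintype.card S + 1 with hN
  have key : ∀ m n, m ≤ n → coeffJ ∅ (p (m + N)) = coeffJ ∅ (p (n + N)) ∧ ∀ J : Cl Γ,
      (2 : ℤ_[2]) ^ m ∣ (coeffJ J.1 (p (m + N)) : ℤ_[2]) - (coeffJ J.1 (p (n + N)) : ℤ_[2]) := by
    intro m n hmn
    have h := hcomp (m + N) (n + N) (by omega)
    rw [← map_sub] at h
    have h' := coeffJ_of_mem (n := m) h
    rw [map_sub, sub_eq_zero] at h'
    exact ⟨h'.1, fun J => by simpa using h'.2 J⟩
  choose L hL using fun J : Cl Γ => exists_limit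
    (fun n => (coeffJ J.1 (p (n + N)) : ℤ_[2])) fun m n hmn => (key m n hmn).2 J
  refine ⟨(coeffJ ∅ (p (0 + N)), L), AdicCompletion.ext fun n => ?_⟩
  rw [toCompletion_val, ← hp n, eq_comm]
  refine (Submodule.Quotient.eq _).2 ?_
  have h := approx_sub_mem (Γ := Γ) (y := (coeffJ ∅ (p (0 + N)), L)) (n := n) le_rfl
    (p := p (n + N)) (key 0 n n.zero_le).1.symm fun J => hL J n
  -- `p n` and `p (n + N)` agree modulo `𝔞 ^ n`, and the latter has the coefficients of the limit.
  have h2 := Ideal.add_mem _ (hcomp n (n + N) (by omega)) h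
  rwa [sub_add_sub_cancel] at h2

end

end CoxK

/-- The `𝔞`-adic completion of
`A = ℤ[X_s]/(X_s² + 2X_s, X_s X_t for s,t distinct non-adjacent)` is isomorphic, as an
abelian group, to `ℤ × ∏_J ℤ₂`, the product over the nonempty cliques `J` of `Γ` of
copies of the 2-adic integers. -/
theorem coxeter_adicCompletion_iso (S : Type) [Fintype S] [DecidableEq S]
    (Γ : SimpleGraph S) :
    Nonempty (AdicCompletion (coxKAugIdeal Γ) (coxKRing Γ) ≃+
      ℤ × ({J : Finset S // Γ.IsClique (J : Set S) ∧ J.Nonempty} → ℤ_[2])) := by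
  classical
  have : Fintype (CoxK.Cl Γ) := Fintype.ofFinite _
  exact ⟨(AddEquiv.ofBijective (CoxK.toCompletion (Γ := Γ))
    ⟨CoxK.toCompletion_injective, CoxK.toCompletion_surjective⟩).symm⟩
end
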